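/- arXiv:2308.00516 — 2 statements merged into one kernel-verified Lean document; each statement's English description precedes it below -/
import Mathlib

section
/- (Grönwall's lemma with lower Dini derivative) Let $I = [a, b)$ with $a < b \leq \infty$, and let $u, \beta : I \to \mathbb{R}$ be continuous functions such that for all $t \in I$ the lower right Dini derivative satisfies $\liminf_{h \to 0^+} \frac{u(t+h)-u(t)}{h} \leq \beta(t)u(t)$. Then for all $t \in I$, $u(t) \leq \exp\left(\int_a^t \beta(s)\,ds\right) u(a)$. -/
/-!
Multiplying `u` by the integrating factor `exp (-∫ β)` and subtracting `ε t` reduces the inequality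
to showing `g b ≤ g a` for a continuous function `g`. The real-valued `liminf` of a function tending
to `+∞` is the junk value `0`, so the Dini hypothesis leaves two possibilities at each point: either
`g` takes smaller values arbitrarily close to the right, or the right derivative of `g` is `+∞`.
If nevertheless `g a < g b`, let `X c` be the last point at which `g ≤ c`. Since `g > c` to the right
of `X c`, only the second possibility can occur there, so the strictly increasing function `X` has
right derivative `0` at every level `c` between `g a` and `g b`. By Baire's theorem `X` is Lipschitz
on some subinterval, hence constant there by the mean value inequality, which is absurd.
-/

open Set Filter Topology MeasureTheory

theorem frequently_lt_or_tendsto_atTop_of_liminf_le {α β : Type*}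
    [ConditionallyCompleteLinearOrder β] {l : Filter α} {q : α → β} {m : β}
    (h : liminf q l ≤ m) : (∀ r, m < r → ∃ᶠ x in l, q x < r) ∨ Tendsto q l atTop := by
  refine or_iff_not_imp_right.2 fun htop r hr => ?_
  obtain ⟨M, hM⟩ : ∃ M, ∃ᶠ x in l, ¬M ≤ q x := by
    simpa only [tendsto_atTop, not_forall, not_eventually] using htop
  have hcobdd : l.IsCoboundedUnder (· ≥ ·) q :=
    IsCoboundedUnder.of_frequently_le (hM.mono fun _ hx => (not_le.1 hx).le)
  exact frequently_lt_of_liminf_lt hcobdd (h.trans_lt hr)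

/-- The lower right Dini derivative of `f` at `x` is at most `m`, or else it is `+∞`. The second
alternative is there because a `liminf` taken in `ℝ` is `0` when the slopes tend to `+∞`. -/
def LowerRightDiniLE (f : ℝ → ℝ) (m x : ℝ) : Prop :=
  (∀ r, m < r → ∃ᶠ z in 𝓝[>] x, slope f x z < r) ∨ Tendsto (slope f x) (𝓝[>] x) atTop

namespace LowerRightDiniLE

variable {f B : ℝ → ℝ} {m B' x : ℝ}

theorem of_liminf_le (h : liminf (fun h => (f (x + h) - f x) / h) (𝓝[>] 0) ≤ m) :
    LowerRightDiniLE f m x := by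
  have hslope : (fun h => (f (x + h) - f x) / h) = slope f x ∘ (x + ·) := by
    funext h
    simp [slope_def_field]
  have hmap : map (x + ·) (𝓝[>] 0) = 𝓝[>] x := by simp
  rw [hslope, liminf_comp, hmap] at h
  exact frequently_lt_or_tendsto_atTop_of_liminf_le h

theorem add (hf : LowerRightDiniLE f m x) (hB : HasDerivWithinAt B B' (Ioi x) x) :
    LowerRightDiniLE (fun z => f z + B z) (m + B') x := by
  have hBs : Tendsto (slope B x) (𝓝[>] x) (𝓝 B') :=
    (hasDerivWithinAt_iff_tendsto_slope' self_notMem_Ioi).1 hB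
  have hslope (z : ℝ) : slope (fun z => f z + B z) x z = slope f x z + slope B x z := by
    simp only [slope_def_field]
    ring
  refine hf.imp (fun hf r hr => ?_) fun hf => ?_
  · obtain ⟨s, hms, hsr⟩ := exists_between (lt_sub_iff_add_lt.2 hr)
    refine ((hf s hms).and_eventually (hBs.eventually_lt_const (lt_sub_comm.1 hsr))).mono ?_
    rintro z ⟨hzf, hzB⟩
    rw [hslope]
    linarith
  · simpa only [← hslope] using hf.atTop_add hBs

theorem mul (hf : LowerRightDiniLE f m x) (hB : HasDerivWithinAt B B' (Ioi x) x)
    (hpos : 0 < B x) : LowerRightDiniLE (fun z => f z * B z) (m * B x + f x * B') x := by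
  have hBx : Tendsto B (𝓝[>] x) (𝓝 (B x)) := hB.continuousWithinAt
  have hBs : Tendsto (fun z => f x * slope B x z) (𝓝[>] x) (𝓝 (f x * B')) :=
    ((hasDerivWithinAt_iff_tendsto_slope' self_notMem_Ioi).1 hB).const_mul (f x)
  have hslope (z : ℝ) :
      slope (fun z => f z * B z) x z = slope f x z * B z + f x * slope B x z := by
    simp only [slope_def_field]
    ring
  refine hf.imp (fun hf r hr => ?_) fun hf => ?_
  · obtain ⟨s, hms, hsr⟩ := exists_between ((lt_div_iff₀ hpos).2 (lt_sub_iff_add_lt.2 hr))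
    have hlim : s * B x + f x * B' < r := lt_sub_iff_add_lt.1 ((lt_div_iff₀ hpos).1 hsr)
    have hev := ((hBx.const_mul s).add hBs).eventually_lt_const hlim
    refine ((hf s hms).and_eventually (hev.and (hBx.eventually_const_lt hpos))).mono ?_
    rintro z ⟨hzs, hzr, hzpos⟩
    calc slope (fun z => f z * B z) x z
        = slope f x z * B z + f x * slope B x z := hslope z
      _ ≤ s * B z + f x * slope B x z := by gcongr
      _ < r := hzr
  · simpa only [← hslope] using (hf.atTop_mul_pos hpos hBx).atTop_add hBs

end LowerRightDiniLE

section MonotoneRightDerivZero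

variable {X : ℝ → ℝ} {p q : ℝ}

theorem lipschitzOnWith_Ioo_of_monotoneOn_of_dense {l r : ℝ} {K : NNReal} {C : Set ℝ}
    (hX : MonotoneOn X (Ioo l r)) (hC : Ioo l r ⊆ closure C)
    (hgrowth : ∀ c ∈ C, ∀ d ∈ Ioo c r, X d ≤ X c + K * (d - c)) :
    LipschitzOnWith K X (Ioo l r) := by
  refine LipschitzOnWith.of_le_add_mul K fun d hd c hc => ?_
  rcases le_or_gt d c with hdc | hcd
  · exact (hX hd hc hdc).trans (le_add_of_nonneg_right (by positivity))
  have hfreq : ∃ᶠ e in 𝓝[<] c, l < e ∧ e ∈ C := by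
    refine (nhdsLT_basis c).frequently_iff.2 fun {s} hs => ?_
    obtain ⟨y, hy⟩ := nonempty_Ioo.2 (max_lt hc.1 hs)
    obtain ⟨e, heC, he⟩ := (closure_inter_open_nonempty_iff isOpen_Ioo).1
      ⟨y, hC ⟨(le_max_left _ _).trans_lt hy.1, hy.2.trans hc.2⟩, hy⟩
    exact ⟨e, ⟨(le_max_right _ _).trans_lt he.1, he.2⟩, (le_max_left _ _).trans_lt he.1, heC⟩
  have hbound : ∃ᶠ e in 𝓝[<] c, X d ≤ X c + K * (d - e) := by
    refine (hfreq.and_eventually self_mem_nhdsWithin).mono ?_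
    rintro e ⟨⟨hle, heC⟩, hec : e < c⟩
    calc X d ≤ X e + K * (d - e) := hgrowth e heC d ⟨hec.trans hcd, hd.2⟩
      _ ≤ X c + K * (d - e) := by
        gcongr
        exact hX ⟨hle, hec.trans hc.2⟩ hc hec.le
  have hlim : Tendsto (fun e => X c + K * (d - e)) (𝓝[<] c) (𝓝 (X c + K * (d - c))) :=
    Continuous.continuousWithinAt (by fun_prop)
  rw [Real.dist_eq, abs_of_pos (sub_pos.2 hcd)]
  exact ge_of_tendsto_of_frequently hlim hbound

theorem exists_nat_forall_le_add_mul_of_isBigO {c : ℝ}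
    (h : (fun d => X d - X c) =O[𝓝[>] c] fun d => d - c) :
    ∃ k : ℕ, ∀ d ∈ Ioo c (c + 1 / (k + 1)), X d ≤ X c + k * (d - c) := by
  obtain ⟨K, hK⟩ := h.bound
  obtain ⟨e, hce, he⟩ := mem_nhdsGT_iff_exists_Ioo_subset.1 hK
  obtain ⟨k, hke, hKk⟩ : ∃ k : ℕ, 1 / ((k : ℝ) + 1) < e - c ∧ K ≤ k :=
    ((tendsto_one_div_add_atTop_nhds_zero_nat.eventually_lt_const (sub_pos.2 hce)).and
      (tendsto_natCast_atTop_atTop.eventually_ge_atTop K)).exists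
  refine ⟨k, fun d hd => sub_le_iff_le_add'.1 ?_⟩
  have hdc : 0 ≤ d - c := sub_nonneg.2 hd.1.le
  calc X d - X c ≤ ‖X d - X c‖ := Real.le_norm_self _
    _ ≤ K * ‖d - c‖ := he ⟨hd.1, by linarith [hd.2]⟩
    _ = K * (d - c) := by rw [Real.norm_of_nonneg hdc]
    _ ≤ k * (d - c) := by gcongr

theorem exists_nonempty_interior_closure_of_isOpen_subset_iUnion {Y ι : Type*}
    [TopologicalSpace Y] [BaireSpace Y] [Countable ι] {U : Set Y} {C : ι → Set Y}
    (hU : IsOpen U) (hne : U.Nonempty) (hUC : U ⊆ ⋃ i, C i) :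
    ∃ i, (interior (closure (C i))).Nonempty := by
  by_contra! hempty
  exact not_isMeagre_of_isOpen hU hne <|
    (isMeagre_iUnion fun i => IsNowhereDense.isMeagre (hempty i)).mono hUC

theorem exists_lipschitzOnWith_Ioo_of_monotoneOn_of_isBigO (hpq : p < q)
    (hX : MonotoneOn X (Ioo p q))
    (hgrowth : ∀ c ∈ Ioo p q, (fun d => X d - X c) =O[𝓝[>] c] fun d => d - c) :
    ∃ l r, l < r ∧ Ioo l r ⊆ Ioo p q ∧ ∃ K, LipschitzOnWith K X (Ioo l r) := by
  let C (k : ℕ) : Set ℝ :=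
    {c ∈ Ioo p q | ∀ d ∈ Ioo c (c + 1 / (k + 1)), X d ≤ X c + k * (d - c)}
  have hcover : Ioo p q ⊆ ⋃ k, C k := fun c hc =>
    mem_iUnion.2 ((exists_nat_forall_le_add_mul_of_isBigO (hgrowth c hc)).imp fun _ hk => ⟨hc, hk⟩)
  obtain ⟨k, l, hl⟩ := exists_nonempty_interior_closure_of_isOpen_subset_iUnion isOpen_Ioo
    (nonempty_Ioo.2 hpq) hcover
  obtain ⟨r', hlr', hr'⟩ := exists_Ico_subset_of_mem_nhds (isOpen_interior.mem_nhds hl)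
    (exists_gt l)
  let r := min r' (l + 1 / (k + 1))
  have hlr : l < r := lt_min hlr' (lt_add_of_pos_right l (by positivity))
  have hdense : Ioo l r ⊆ interior (closure (C k)) := fun c hc =>
    hr' ⟨hc.1.le, hc.2.trans_le (min_le_left _ _)⟩
  have hsub : Ioo l r ⊆ Ioo p q := by
    have hclosure : closure (C k) ⊆ Icc p q :=
      closure_minimal (fun c hc => Ioo_subset_Icc_self hc.1) isClosed_Icc
    exact interior_Icc (a := p) (b := q) ▸ hdense.trans (interior_mono hclosure)
  refine ⟨l, r, hlr, hsub, k, lipschitzOnWith_Ioo_of_monotoneOn_of_dense (C := C k ∩ Ioo l r)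
    (hX.mono hsub) ?_ fun c hc d hd => hc.1.2 d ⟨hd.1, ?_⟩⟩
  · calc Ioo l r ⊆ closure (C k) ∩ Ioo l r := fun c hc => ⟨interior_subset (hdense hc), hc⟩
      _ ⊆ closure (C k ∩ Ioo l r) := isOpen_Ioo.closure_inter
  · linarith [hd.2, hc.2.1, min_le_right r' (l + 1 / (k + 1))]

theorem not_strictMonoOn_of_hasDerivWithinAt_Ici_zero (hpq : p < q)
    (hX' : ∀ c ∈ Ioo p q, HasDerivWithinAt X 0 (Ici c) c) : ¬StrictMonoOn X (Ioo p q) := by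
  intro hX
  obtain ⟨l, r, hlr, hsub, K, hK⟩ := exists_lipschitzOnWith_Ioo_of_monotoneOn_of_isBigO hpq
    hX.monotoneOn fun c hc => (hX' c hc).Ioi_of_Ici.hasFDerivWithinAt.isBigO_sub
  obtain ⟨c, hlc, hcr⟩ := exists_between hlr
  obtain ⟨d, hcd, hdr⟩ := exists_between hcr
  have hIcc : Icc c d ⊆ Ioo l r := Icc_subset_Ioo hlc hdr
  have hconst : X d = X c := constant_of_has_deriv_right_zero (hK.continuousOn.mono hIcc)
    (fun y hy => hX' y (hsub (hIcc (Ico_subset_Icc_self hy)))) d (right_mem_Icc.2 hcd.le)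
  exact (hX (hsub ⟨hlc, hcr⟩) (hsub ⟨hlc.trans hcd, hdr⟩) hcd).ne' hconst

end MonotoneRightDerivZero

/-- The last point of `[a, b]` at which `g` is at most `c`. For `g` continuous and `c` between `g a`
and `g b`, this is the largest solution of `g x = c`, and it is a right inverse of `g`. -/
noncomputable def lastPointLE (g : ℝ → ℝ) (a b c : ℝ) : ℝ :=
  sSup (Icc a b ∩ g ⁻¹' Iic c)

section LastPointLE

variable {g : ℝ → ℝ} {a b c : ℝ}

theorem isGreatest_lastPointLE (hab : a ≤ b) (hg : ContinuousOn g (Icc a b)) (hc : g a ≤ c) :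
    IsGreatest (Icc a b ∩ g ⁻¹' Iic c) (lastPointLE g a b c) :=
  (isCompact_Icc.of_isClosed_subset (hg.preimage_isClosed_of_isClosed isClosed_Icc isClosed_Iic)
    inter_subset_left).isGreatest_sSup ⟨a, left_mem_Icc.2 hab, hc⟩

theorem lt_apply_of_lastPointLE_lt (hab : a ≤ b) (hg : ContinuousOn g (Icc a b)) (hc : g a ≤ c)
    {y : ℝ} (hy : y ∈ Ioc (lastPointLE g a b c) b) : c < g y := by
  have hX := isGreatest_lastPointLE hab hg hc
  by_contra! hle
  exact (hX.2 ⟨⟨hX.1.1.1.trans hy.1.le, hy.2⟩, hle⟩).not_gt hy.1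

theorem lastPointLE_mem_Ico (hab : a ≤ b) (hg : ContinuousOn g (Icc a b))
    (hc : c ∈ Ico (g a) (g b)) : lastPointLE g a b c ∈ Ico a b := by
  obtain ⟨hX, hXc⟩ := (isGreatest_lastPointLE hab hg hc.1).1
  refine ⟨hX.1, hX.2.lt_of_ne fun hXb => ?_⟩
  rw [hXb] at hXc
  exact hc.2.not_ge hXc

theorem apply_lastPointLE (hab : a ≤ b) (hg : ContinuousOn g (Icc a b))
    (hc : c ∈ Icc (g a) (g b)) : g (lastPointLE g a b c) = c := by
  obtain ⟨⟨hX, hXc⟩, hmax⟩ := isGreatest_lastPointLE hab hg hc.1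
  obtain ⟨y, hy, hyc⟩ := intermediate_value_Icc hX.2 (hg.mono (Icc_subset_Icc_left hX.1))
    ⟨hXc, hc.2⟩
  have hyX : y = lastPointLE g a b c :=
    le_antisymm (hmax ⟨⟨hX.1.trans hy.1, hy.2⟩, hyc.le⟩) hy.1
  rw [← hyX, hyc]

theorem strictMonoOn_lastPointLE (hab : a ≤ b) (hg : ContinuousOn g (Icc a b)) :
    StrictMonoOn (lastPointLE g a b) (Icc (g a) (g b)) := by
  have hmono : MonotoneOn (lastPointLE g a b) (Icc (g a) (g b)) := fun c hc d hd hcd =>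
    (isGreatest_lastPointLE hab hg hd.1).2
      (inter_subset_inter_right _ (preimage_mono (Iic_subset_Iic.2 hcd))
        (isGreatest_lastPointLE hab hg hc.1).1)
  have hinv : LeftInvOn g (lastPointLE g a b) (Icc (g a) (g b)) := fun c hc =>
    apply_lastPointLE hab hg hc
  exact hmono.strictMonoOn_of_injOn hinv.injOn

theorem continuousWithinAt_Ici_lastPointLE (hab : a ≤ b) (hg : ContinuousOn g (Icc a b))
    (hc : c ∈ Ico (g a) (g b)) : ContinuousWithinAt (lastPointLE g a b) (Ici c) c := by
  have hX := lastPointLE_mem_Ico hab hg hc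
  have hmono := strictMonoOn_lastPointLE hab hg
  refine hmono.continuousWithinAt_right_of_exists_between
    (mem_of_superset (Ico_mem_nhdsGE hc.2) fun d hd => ⟨hc.1.trans hd.1, hd.2.le⟩) fun y hy => ?_
  let y' := min y b
  have hy' : y' ∈ Ioc (lastPointLE g a b c) b := ⟨lt_min hy hX.2, min_le_right _ _⟩
  obtain ⟨z, hz, hzmin⟩ := isCompact_Icc.exists_isMinOn (nonempty_Icc.2 hy'.2)
    (hg.mono (Icc_subset_Icc_left (hX.1.trans hy'.1.le)))
  obtain ⟨d, hcd, hdz⟩ := exists_between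
    (lt_apply_of_lastPointLE_lt hab hg hc.1 ⟨hy'.1.trans_le hz.1, hz.2⟩)
  have hd : d ∈ Icc (g a) (g b) :=
    ⟨hc.1.trans hcd.le, hdz.le.trans (hzmin (right_mem_Icc.2 hy'.2))⟩
  refine ⟨d, hd, hmono ⟨hc.1, hc.2.le⟩ hd hcd, ?_⟩
  by_contra! hlt
  have hzd : g z ≤ g (lastPointLE g a b d) :=
    hzmin ⟨(min_le_left _ _).trans hlt.le, (isGreatest_lastPointLE hab hg hd.1).1.1.2⟩
  rw [apply_lastPointLE hab hg hd] at hzd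
  exact hdz.not_ge hzd

theorem hasDerivWithinAt_lastPointLE_zero (hab : a ≤ b) (hg : ContinuousOn g (Icc a b))
    (hc : c ∈ Ico (g a) (g b))
    (htop : Tendsto (slope g (lastPointLE g a b c)) (𝓝[>] lastPointLE g a b c) atTop) :
    HasDerivWithinAt (lastPointLE g a b) 0 (Ici c) c := by
  have hc' : c ∈ Icc (g a) (g b) := ⟨hc.1, hc.2.le⟩
  have hIoo : ∀ᶠ d in 𝓝[>] c, d ∈ Ioo c (g b) := Ioo_mem_nhdsGT hc.2
  have hX : Tendsto (lastPointLE g a b) (𝓝[>] c) (𝓝[>] lastPointLE g a b c) := by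
    refine tendsto_nhdsWithin_iff.2
      ⟨(continuousWithinAt_Ici_lastPointLE hab hg hc).mono Ioi_subset_Ici_self, ?_⟩
    filter_upwards [hIoo] with d hd
    exact strictMonoOn_lastPointLE hab hg hc' ⟨hc.1.trans hd.1.le, hd.2.le⟩ hd.1
  rw [← hasDerivWithinAt_Ioi_iff_Ici, hasDerivWithinAt_iff_tendsto_slope' self_notMem_Ioi]
  refine (htop.comp hX).inv_tendsto_atTop.congr' ?_
  filter_upwards [hIoo] with d hd
  simp only [Pi.inv_apply, Function.comp_apply, slope_def_field, inv_div,
    apply_lastPointLE hab hg hc', apply_lastPointLE hab hg ⟨hc.1.trans hd.1.le, hd.2.le⟩]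

end LastPointLE

theorem right_le_left_of_frequently_lt_or_tendsto_slope_atTop {g : ℝ → ℝ} {a b : ℝ}
    (hab : a ≤ b) (hg : ContinuousOn g (Icc a b))
    (h : ∀ x ∈ Ico a b, (∃ᶠ z in 𝓝[>] x, g z < g x) ∨ Tendsto (slope g x) (𝓝[>] x) atTop) :
    g b ≤ g a := by
  by_contra! hlt
  refine not_strictMonoOn_of_hasDerivWithinAt_Ici_zero hlt (fun c hc => ?_)
    ((strictMonoOn_lastPointLE hab hg).mono Ioo_subset_Icc_self)
  have hc' : c ∈ Ico (g a) (g b) := ⟨hc.1.le, hc.2⟩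
  have hX := lastPointLE_mem_Ico hab hg hc'
  refine hasDerivWithinAt_lastPointLE_zero hab hg hc' ((h _ hX).resolve_left fun hfreq => ?_)
  obtain ⟨z, hzc, hz⟩ := (hfreq.and_eventually (Ioc_mem_nhdsGT hX.2)).exists
  rw [apply_lastPointLE hab hg ⟨hc.1.le, hc.2.le⟩] at hzc
  exact hzc.not_gt (lt_apply_of_lastPointLE_lt hab hg hc'.1 hz)

theorem LowerRightDiniLE.frequently_lt_or_tendsto_slope_atTop {f : ℝ → ℝ} {m x : ℝ}
    (hf : LowerRightDiniLE f m x) (hm : m < 0) :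
    (∃ᶠ z in 𝓝[>] x, f z < f x) ∨ Tendsto (slope f x) (𝓝[>] x) atTop := by
  refine hf.imp_left fun hf => ((hf 0 hm).and_eventually self_mem_nhdsWithin).mono ?_
  rintro z ⟨hz, hxz : x < z⟩
  rwa [slope_def_field, div_lt_iff₀ (sub_pos.2 hxz), zero_mul, sub_neg] at hz

theorem right_le_left_of_lowerRightDiniLE_zero {f : ℝ → ℝ} {a b : ℝ} (hab : a ≤ b)
    (hf : ContinuousOn f (Icc a b)) (hf' : ∀ x ∈ Ico a b, LowerRightDiniLE f 0 x) :
    f b ≤ f a := by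
  have htilt : ∀ ε > 0, f b + -ε * b ≤ f a + -ε * a := fun ε hε =>
    right_le_left_of_frequently_lt_or_tendsto_slope_atTop hab (g := fun z => f z + -ε * z)
      (hf.add (by fun_prop)) fun x hx =>
        ((hf' x hx).add (hasDerivAt_const_mul (-ε)).hasDerivWithinAt
          ).frequently_lt_or_tendsto_slope_atTop (by linarith)
  have hlim : Tendsto (fun ε => f a + ε * (b - a)) (𝓝[>] 0) (𝓝 (f a + 0 * (b - a))) :=
    Continuous.continuousWithinAt (by fun_prop)
  rw [zero_mul, add_zero] at hlim
  refine ge_of_tendsto hlim (eventually_nhdsWithin_of_forall fun ε hε => ?_)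
  linarith [htilt ε hε]

theorem hasDerivWithinAt_Icc_integral {E : Type*} [NormedAddCommGroup E] [NormedSpace ℝ E]
    [CompleteSpace E] {β : ℝ → E} {a b x : ℝ} (hβ : ContinuousOn β (Icc a b))
    (hx : x ∈ Icc a b) : HasDerivWithinAt (fun y => ∫ s in a..y, β s) (β x) (Icc a b) x := by
  have : Fact (x ∈ Icc a b) := ⟨hx⟩
  have hint : IntervalIntegrable β volume a x :=
    (hβ.mono (by simpa only [uIcc_of_le hx.1] using Icc_subset_Icc_right hx.2)).intervalIntegrable
  exact intervalIntegral.integral_hasDerivWithinAt_right hint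
    (hβ.stronglyMeasurableAtFilter_nhdsWithin measurableSet_Icc x) (hβ x hx)

theorem le_exp_integral_mul_of_lowerRightDiniLE {u β : ℝ → ℝ} {a b : ℝ} (hab : a ≤ b)
    (hu : ContinuousOn u (Icc a b)) (hβ : ContinuousOn β (Icc a b))
    (h : ∀ x ∈ Ico a b, LowerRightDiniLE u (β x * u x) x) :
    u b ≤ Real.exp (∫ s in a..b, β s) * u a := by
  let E (x : ℝ) : ℝ := Real.exp (-∫ s in a..x, β s)
  have hE (x : ℝ) (hx : x ∈ Icc a b) : HasDerivWithinAt E (E x * -β x) (Icc a b) x :=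
    (hasDerivWithinAt_Icc_integral hβ hx).fun_neg.exp
  have hE_cont : ContinuousOn E (Icc a b) := fun x hx => (hE x hx).continuousWithinAt
  have hdini (x : ℝ) (hx : x ∈ Ico a b) : LowerRightDiniLE (fun z => u z * E z) 0 x := by
    have hEx : HasDerivWithinAt E (E x * -β x) (Ioi x) x :=
      (hE x (Ico_subset_Icc_self hx)).mono_of_mem_nhdsWithin (Icc_mem_nhdsGT_of_mem hx)
    convert (h x hx).mul hEx (Real.exp_pos _) using 1
    ring
  have hle : u b * E b ≤ u a * E a :=
    right_le_left_of_lowerRightDiniLE_zero hab (hu.mul hE_cont) hdini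
  have hEa : E a = 1 := by
    simp only [E, intervalIntegral.integral_same, neg_zero, Real.exp_zero]
  have hEb : E b = (Real.exp (∫ s in a..b, β s))⁻¹ := Real.exp_neg _
  rwa [hEa, mul_one, hEb, ← div_eq_mul_inv, div_le_iff₀' (Real.exp_pos _)] at hle

theorem stmt7 (a : ℝ) (b : EReal) (hab : (a : EReal) < b)
    (u β : ℝ → ℝ) (I : Set ℝ) (hI : I = {t : ℝ | a ≤ t ∧ (t : EReal) < b})
    (hu : ContinuousOn u I) (hβ : ContinuousOn β I)
    (hdini : ∀ t ∈ I,
      Filter.liminf (fun h : ℝ => (u (t + h) - u t) / h) (nhdsWithin 0 (Set.Ioi 0))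
        ≤ β t * u t) :
    ∀ t ∈ I, u t ≤ Real.exp (∫ s in a..t, β s) * u a := by
  intro t ht
  have hsub : Icc a t ⊆ I := by
    subst hI
    exact fun x hx => ⟨hx.1, (EReal.coe_le_coe_iff.2 hx.2).trans_lt ht.2⟩
  have hat : a ≤ t := (hI ▸ ht).1
  exact le_exp_integral_mul_of_lowerRightDiniLE hat (hu.mono hsub) (hβ.mono hsub) fun x hx =>
    .of_liminf_le (hdini x (hsub (Ico_subset_Icc_self hx)))
end

section
/- If a continuous function $f : [a,b) \to \mathbb{R}$ satisfies $\liminf_{h\to 0^+} \frac{f(t+h)-f(t)}{h} \leq 0$ for every $t \in [a,b)$, then $f$ is non-increasing on $[a,b)$. -/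
/-!
Since the `liminf` is real-valued, the hypothesis does not exclude points where the right
derivative is `+∞`. After subtracting `l * t` with `l > 0`, each point either is of this kind or has
smaller values arbitrarily close to its right. If such a function `g` grew from `a` to `c`, consider
for `y ∈ (g a, g c)` the last point of `[a, c]` where `g` takes the value `y`. To the right of this
point `g` exceeds `y`, so `g` has right derivative `+∞` there, and the map sending `y` to this last
point has right derivative `0` everywhere. By Baire's theorem, a function with a right derivative
everywhere is Lipschitz on some open subinterval; as its right derivative is `0`, it is constant
there, which contradicts injectivity.
-/

open Set Filter Topology Asymptotics

section RightLipschitz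

theorem lipschitzOnWith_Ioo_of_subset_closure {X : Type*} [PseudoMetricSpace X] {q : ℝ → X}
    {u v : ℝ} {D : Set ℝ} {C : NNReal} (hD : Ioo u v ⊆ closure D)
    (hq : ∀ x ∈ Ioo u v, ContinuousWithinAt q (Ioi x) x)
    (hC : ∀ x ∈ D ∩ Ioo u v, ∀ y ∈ Ioo x v, dist (q x) (q y) ≤ C * (y - x)) :
    LipschitzOnWith C q (Ioo u v) := by
  have hlt : ∀ x ∈ Ioo u v, ∀ y ∈ Ioo x v, dist (q x) (q y) ≤ C * (y - x) := by
    intro x hx y hy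
    have hfreq : ∃ᶠ w in 𝓝[>] x, dist (q w) (q y) ≤ C * (y - w) := by
      refine ((nhdsGT_basis x).frequently_iff).2 fun z hz => ?_
      obtain ⟨w₀, hxw₀, hw₀⟩ := exists_between (lt_min hz hy.1)
      have hw₀v : w₀ < v := (hw₀.trans_le (min_le_right _ _)).trans hy.2
      obtain ⟨w, ⟨hxw, hw⟩, hwD⟩ := mem_closure_iff.1 (hD ⟨hx.1.trans hxw₀, hw₀v⟩)
        (Ioo x (min z y)) isOpen_Ioo ⟨hxw₀, hw₀⟩
      have hwy : w < y := hw.trans_le (min_le_right _ _)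
      exact ⟨w, ⟨hxw, hw.trans_le (min_le_left _ _)⟩,
        hC w ⟨hwD, hx.1.trans hxw, hwy.trans hy.2⟩ y ⟨hwy, hy.2⟩⟩
    have hlim : Tendsto (fun w => dist (q w) (q y) - C * (y - w)) (𝓝[>] x)
        (𝓝 (dist (q x) (q y) - C * (y - x))) :=
      ((hq x hx).dist tendsto_const_nhds).sub
        (Continuous.tendsto (by fun_prop) x |>.mono_left nhdsWithin_le_nhds)
    exact sub_nonpos.1 (le_of_tendsto_of_frequently hlim (hfreq.mono fun w hw => sub_nonpos.2 hw))
  refine LipschitzOnWith.of_dist_le_mul fun x hx y hy => ?_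
  rcases lt_trichotomy x y with hxy | rfl | hyx
  · rw [dist_comm x y, Real.dist_eq, abs_of_pos (sub_pos.2 hxy)]
    exact hlt x hx y ⟨hxy, hy.2⟩
  · simp only [dist_self, mul_zero, le_refl]
  · rw [dist_comm, Real.dist_eq, abs_of_pos (sub_pos.2 hyx)]
    exact hlt y hy x ⟨hyx, hx.2⟩

theorem exists_inter_interior_closure_nonempty {X ι : Type*} [TopologicalSpace X] [BaireSpace X]
    [Countable ι] {U : Set X} {D : ι → Set X} (hU : IsOpen U) (hne : U.Nonempty)
    (hD : U ⊆ ⋃ i, D i) : ∃ i, (U ∩ interior (closure (D i))).Nonempty := by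
  obtain ⟨x₀, hx₀⟩ := hne
  obtain ⟨i₀, -⟩ := mem_iUnion.1 (hD hx₀)
  have hcover : ⋃ i, (closure (D i) ∪ Uᶜ) = univ := by
    refine eq_univ_of_forall fun x => ?_
    by_cases hx : x ∈ U
    · obtain ⟨i, hi⟩ := mem_iUnion.1 (hD hx)
      exact mem_iUnion.2 ⟨i, Or.inl (subset_closure hi)⟩
    · exact mem_iUnion.2 ⟨i₀, Or.inr hx⟩
  obtain ⟨x, hx, hxU⟩ := (dense_iUnion_interior_of_closed
    (fun i => isClosed_closure.union hU.isClosed_compl) hcover).exists_mem_open hU ⟨x₀, hx₀⟩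
  obtain ⟨i, hi⟩ := mem_iUnion.1 hx
  refine ⟨i, x, hxU, mem_interior_iff_mem_nhds.2 ?_⟩
  filter_upwards [mem_interior_iff_mem_nhds.1 hi, hU.mem_nhds hxU] with z hz hzU
  exact hz.resolve_right fun h => h hzU

theorem exists_nat_dist_le_of_isBigO_sub {E : Type*} [SeminormedAddCommGroup E] {q : ℝ → E} {x : ℝ}
    (hq : (fun z => q z - q x) =O[𝓝[>] x] fun z => z - x) :
    ∃ n : ℕ, ∀ z ∈ Ioo x (x + 1 / (n + 1)), dist (q x) (q z) ≤ n * (z - x) := by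
  obtain ⟨C, hC⟩ := hq.bound
  obtain ⟨w, hxw, hw⟩ := mem_nhdsGT_iff_exists_Ioo_subset.1 hC
  have hxw : x < w := hxw
  obtain ⟨n, hn, hCn⟩ :=
    ((tendsto_one_div_add_atTop_nhds_zero_nat.eventually_lt_const (sub_pos.2 hxw)).and
      (tendsto_natCast_atTop_atTop.eventually_ge_atTop C)).exists
  refine ⟨n, fun z hz => ?_⟩
  have hzx : 0 < z - x := sub_pos.2 hz.1
  calc dist (q x) (q z) = ‖q z - q x‖ := by rw [dist_comm, dist_eq_norm]
    _ ≤ C * ‖z - x‖ := hw ⟨hz.1, by linarith [hz.2]⟩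
    _ ≤ n * (z - x) := by rw [Real.norm_of_nonneg hzx.le]; gcongr

theorem exists_Ioo_subset_lipschitzOnWith_of_isBigO_sub {E : Type*} [NormedAddCommGroup E]
    {q : ℝ → E} {u v : ℝ} (huv : u < v)
    (hq : ∀ x ∈ Ioo u v, (fun z => q z - q x) =O[𝓝[>] x] fun z => z - x) :
    ∃ a b, a < b ∧ Ioo a b ⊆ Ioo u v ∧ ∃ C, LipschitzOnWith C q (Ioo a b) := by
  let D (n : ℕ) : Set ℝ := {x | ∀ z ∈ Ioo x (x + 1 / (n + 1)), dist (q x) (q z) ≤ n * (z - x)}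
  obtain ⟨n, x, hx, hxD⟩ := exists_inter_interior_closure_nonempty (D := D) isOpen_Ioo
    (nonempty_Ioo.2 huv) fun x hx => mem_iUnion.2 (exists_nat_dist_le_of_isBigO_sub (hq x hx))
  let δ : ℝ := 1 / (n + 1) / 2
  have hδ : 0 < δ := by positivity
  obtain ⟨a, b, hxab, hab⟩ := mem_nhds_iff_exists_Ioo_subset.1 (inter_mem
    (inter_mem (isOpen_Ioo.mem_nhds hx) (mem_interior_iff_mem_nhds.1 hxD))
    (Ioo_mem_nhds (sub_lt_self x hδ) (lt_add_of_pos_right x hδ)))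
  have hsub : Ioo a b ⊆ Ioo u v := fun y hy => (hab hy).1.1
  refine ⟨a, b, hxab.1.trans hxab.2, hsub, n,
    lipschitzOnWith_Ioo_of_subset_closure (fun y hy => (hab hy).1.2) (fun y hy => ?_) ?_⟩
  · have hcont : Tendsto (fun z => z - y) (𝓝[>] y) (𝓝 0) :=
      tendsto_sub_nhds_zero_iff.2 tendsto_id |>.mono_left nhdsWithin_le_nhds
    exact tendsto_sub_nhds_zero_iff.1 ((hq y (hsub hy)).trans_tendsto hcont)
  · rintro y ⟨hyD, hy⟩ z hz
    have hyδ : x - δ < y := (hab hy).2.1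
    have hzδ : z < x + δ := (hab ⟨hy.1.trans hz.1, hz.2⟩).2.2
    have hδδ : δ + δ = 1 / (n + 1) := add_halves _
    exact hyD z ⟨hz.1, by linarith⟩

theorem not_injOn_Ioo_of_hasDerivWithinAt_right_zero {E : Type*} [NormedAddCommGroup E]
    [NormedSpace ℝ E] {q : ℝ → E} {u v : ℝ} (huv : u < v)
    (hq : ∀ x ∈ Ioo u v, HasDerivWithinAt q 0 (Ici x) x) : ¬ InjOn q (Ioo u v) := by
  obtain ⟨a, b, hab, hsub, C, hC⟩ := exists_Ioo_subset_lipschitzOnWith_of_isBigO_sub huv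
    fun x hx => (hq x hx).Ioi_of_Ici.differentiableWithinAt.isBigO_sub
  obtain ⟨x, hax, hxb⟩ := exists_between hab
  obtain ⟨y, hxy, hyb⟩ := exists_between hxb
  have hIcc : Icc x y ⊆ Ioo a b := Icc_subset_Ioo hax hyb
  have hqxy : q y = q x := constant_of_has_deriv_right_zero (hC.continuousOn.mono hIcc)
    (fun z hz => hq z (hsub (hIcc (Ico_subset_Icc_self hz)))) y (right_mem_Icc.2 hxy.le)
  exact fun hinj => hxy.ne' (hinj (hsub (hIcc (right_mem_Icc.2 hxy.le)))
    (hsub (hIcc (left_mem_Icc.2 hxy.le))) hqxy)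

end RightLipschitz

section LastPreimage

/-- The last point of `[a, c]` at which `g` takes the value `y`; for continuous `g` this is a right
inverse of `g` on `[g a, g c]`. It is encoded as a supremum, so it is only meaningful for values
that `g` takes. -/
noncomputable def lastPreimage {α β : Type*} [ConditionallyCompleteLinearOrder α] (g : α → β)
    (a c : α) (y : β) : α :=
  sSup (Icc a c ∩ g ⁻¹' {y})

variable {α β : Type*} [ConditionallyCompleteLinearOrder α] [TopologicalSpace α] [OrderTopology α]
  [DenselyOrdered α] [LinearOrder β] [TopologicalSpace β] [OrderTopology β]
  {g : α → β} {a c : α} {y : β}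

theorem isGreatest_lastPreimage (hac : a ≤ c) (hg : ContinuousOn g (Icc a c))
    (hy : y ∈ Icc (g a) (g c)) :
    IsGreatest (Icc a c ∩ g ⁻¹' {y}) (lastPreimage g a c y) := by
  have hcomp : IsCompact (Icc a c ∩ g ⁻¹' {y}) :=
    isCompact_Icc.of_isClosed_subset
      (hg.preimage_isClosed_of_isClosed isClosed_Icc isClosed_singleton) inter_subset_left
  exact hcomp.isGreatest_sSup (intermediate_value_Icc hac hg hy)

theorem apply_lastPreimage (hac : a ≤ c) (hg : ContinuousOn g (Icc a c))
    (hy : y ∈ Icc (g a) (g c)) : g (lastPreimage g a c y) = y :=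
  (isGreatest_lastPreimage hac hg hy).1.2

theorem lastPreimage_mem_Ico (hac : a ≤ c) (hg : ContinuousOn g (Icc a c))
    (hy : y ∈ Ico (g a) (g c)) : lastPreimage g a c y ∈ Ico a c := by
  have hy' := Ico_subset_Icc_self hy
  have hmem := (isGreatest_lastPreimage hac hg hy').1.1
  refine ⟨hmem.1, hmem.2.lt_of_ne fun h => hy.2.ne' ?_⟩
  rw [← apply_lastPreimage hac hg hy', h]

theorem lt_apply_of_lastPreimage_lt (hac : a ≤ c) (hg : ContinuousOn g (Icc a c))
    (hy : y ∈ Icc (g a) (g c)) {z : α} (hz : z ∈ Ioc (lastPreimage g a c y) c) : y < g z := by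
  have hlast := isGreatest_lastPreimage hac hg hy
  have haz : a ≤ z := hlast.1.1.1.trans hz.1.le
  by_contra! hzy
  obtain ⟨w, hw, hwy⟩ :=
    intermediate_value_Icc hz.2 (hg.mono (Icc_subset_Icc_left haz)) ⟨hzy, hy.2⟩
  exact (hz.1.trans_le hw.1).not_ge (hlast.2 ⟨⟨haz.trans hw.1, hw.2⟩, hwy⟩)

theorem strictMonoOn_lastPreimage (hac : a ≤ c) (hg : ContinuousOn g (Icc a c)) :
    StrictMonoOn (lastPreimage g a c) (Icc (g a) (g c)) := by
  intro y hy y' hy' hyy'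
  by_contra! hle
  rcases hle.lt_or_eq with hlt | heq
  · have := lt_apply_of_lastPreimage_lt hac hg hy'
      ⟨hlt, (isGreatest_lastPreimage hac hg hy).1.1.2⟩
    rw [apply_lastPreimage hac hg hy] at this
    exact hyy'.not_gt this
  · rw [← apply_lastPreimage hac hg hy, ← apply_lastPreimage hac hg hy', heq] at hyy'
    exact hyy'.false

theorem tendsto_lastPreimage_nhdsGT (hac : a ≤ c) (hg : ContinuousOn g (Icc a c))
    (hy : y ∈ Ico (g a) (g c)) :
    Tendsto (lastPreimage g a c) (𝓝[>] y) (𝓝[>] lastPreimage g a c y) := by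
  have hy' := Ico_subset_Icc_self hy
  obtain ⟨haq, hqc⟩ := lastPreimage_mem_Ico hac hg hy
  have hgt : ∀ᶠ y' in 𝓝[>] y, lastPreimage g a c y < lastPreimage g a c y' := by
    filter_upwards [Ioo_mem_nhdsGT hy.2] with y' hyy'
    exact strictMonoOn_lastPreimage hac hg hy' ⟨hy.1.trans hyy'.1.le, hyy'.2.le⟩ hyy'.1
  refine tendsto_nhdsWithin_iff.2 ⟨tendsto_order.2 ⟨fun z hz => hgt.mono fun _ => hz.trans,
    fun z hz => ?_⟩, hgt⟩
  obtain ⟨w, hqw, hw⟩ := exists_between (lt_min hz hqc)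
  obtain ⟨hwz, hwc⟩ := lt_min_iff.1 hw
  obtain ⟨p, hp, hmin⟩ := isCompact_Icc.exists_isMinOn (nonempty_Icc.2 hwc.le)
    (hg.mono (Icc_subset_Icc_left (haq.trans hqw.le)))
  have hyp : y < g p := lt_apply_of_lastPreimage_lt hac hg hy' ⟨hqw.trans_le hp.1, hp.2⟩
  filter_upwards [Ioo_mem_nhdsGT (lt_min hyp hy.2)] with y' hyy'
  obtain ⟨hy'p, hy'c⟩ := lt_min_iff.1 hyy'.2
  have hlast := isGreatest_lastPreimage hac hg ⟨hy.1.trans hyy'.1.le, hy'c.le⟩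
  by_contra! hle
  have hpy' : g p ≤ g (lastPreimage g a c y') := hmin ⟨hwz.le.trans hle, hlast.1.1.2⟩
  exact hy'p.not_ge (hpy'.trans_eq hlast.1.2)

theorem hasDerivWithinAt_lastPreimage_zero {g : ℝ → ℝ} {a c y : ℝ} (hac : a ≤ c)
    (hg : ContinuousOn g (Icc a c)) (hy : y ∈ Ico (g a) (g c))
    (htop : Tendsto (slope g (lastPreimage g a c y)) (𝓝[>] lastPreimage g a c y) atTop) :
    HasDerivWithinAt (lastPreimage g a c) 0 (Ici y) y := by
  refine (hasDerivWithinAt_iff_tendsto_slope' self_notMem_Ioi).2 ?_ |>.Ici_of_Ioi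
  refine (tendsto_inv_atTop_zero.comp
    (htop.comp (tendsto_lastPreimage_nhdsGT hac hg hy))).congr' ?_
  filter_upwards [Ioo_mem_nhdsGT hy.2] with y' hyy'
  simp only [Function.comp_apply, slope_def_field,
    apply_lastPreimage hac hg (Ico_subset_Icc_self hy),
    apply_lastPreimage hac hg ⟨hy.1.trans hyy'.1.le, hyy'.2.le⟩, inv_div]

end LastPreimage

section DiniDerivative

variable {a c : ℝ}

theorem le_of_tendsto_slope_atTop_or_frequently_slope_neg {g : ℝ → ℝ} (hac : a ≤ c)
    (hg : ContinuousOn g (Icc a c))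
    (hslope : ∀ x ∈ Ico a c, Tendsto (slope g x) (𝓝[>] x) atTop ∨ ∃ᶠ z in 𝓝[>] x, slope g x z < 0) :
    g c ≤ g a := by
  by_contra! hlt
  refine not_injOn_Ioo_of_hasDerivWithinAt_right_zero hlt (fun y hy => ?_)
    ((strictMonoOn_lastPreimage hac hg).injOn.mono Ioo_subset_Icc_self)
  have hy' := Ioo_subset_Ico_self hy
  have hmem := lastPreimage_mem_Ico hac hg hy'
  refine hasDerivWithinAt_lastPreimage_zero hac hg hy' ((hslope _ hmem).resolve_right ?_)
  rw [not_frequently]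
  filter_upwards [Ioo_mem_nhdsGT hmem.2] with z hz
  have hyz := lt_apply_of_lastPreimage_lt hac hg (Ioo_subset_Icc_self hy) (Ioo_subset_Ioc_self hz)
  rw [slope_def_field, apply_lastPreimage hac hg (Ioo_subset_Icc_self hy), not_lt]
  exact div_nonneg (sub_pos.2 hyz).le (sub_pos.2 hz.1).le

theorem slope_sub_const_mul {𝕜 : Type*} [Field 𝕜] (f : 𝕜 → 𝕜) (l : 𝕜) {x z : 𝕜} (hxz : x ≠ z) :
    slope (fun t => f t - l * t) x z = slope f x z - l := by
  have : z - x ≠ 0 := sub_ne_zero.2 hxz.symm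
  simp only [slope_def_field]
  field_simp
  ring

theorem le_of_tendsto_slope_atTop_or_frequently_slope_lt {f : ℝ → ℝ} (hac : a ≤ c)
    (hf : ContinuousOn f (Icc a c))
    (hslope : ∀ x ∈ Ico a c, Tendsto (slope f x) (𝓝[>] x) atTop ∨
      ∀ l, 0 < l → ∃ᶠ z in 𝓝[>] x, slope f x z < l) :
    f c ≤ f a := by
  have hbound : ∀ l, 0 < l → f c ≤ f a + l * (c - a) := by
    intro l hl
    have htilt : f c - l * c ≤ f a - l * a := by
      refine le_of_tendsto_slope_atTop_or_frequently_slope_neg (g := fun t => f t - l * t) hac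
        (hf.sub (by fun_prop)) fun x hx => ?_
      have hsub : ∀ᶠ z in 𝓝[>] x, slope f x z - l = slope (fun t => f t - l * t) x z :=
        eventually_mem_nhdsWithin.mono fun z hz => (slope_sub_const_mul f l (ne_of_lt hz)).symm
      refine (hslope x hx).imp (fun htop => ?_) fun hlt => ?_
      · exact (tendsto_atTop_add_const_right _ (-l) htop).congr' hsub
      · refine ((hlt l hl).and_eventually hsub).mono fun z hz => ?_
        exact hz.2 ▸ sub_neg.2 hz.1
    linarith
  have hlim : Tendsto (fun l => f a + l * (c - a)) (𝓝[>] 0) (𝓝 (f a)) := by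
    have : Continuous fun l => f a + l * (c - a) := by fun_prop
    simpa using (this.tendsto 0).mono_left nhdsWithin_le_nhds
  exact ge_of_tendsto hlim (eventually_mem_nhdsWithin.mono hbound)

-- In `ℝ`, the `liminf` of a function tending to `+∞` is the junk value `0`, hence the first
-- alternative.
theorem tendsto_atTop_or_frequently_lt_of_liminf_le {α β : Type*}
    [ConditionallyCompleteLinearOrder β] {F : Filter α} {u : α → β} {r : β} (hu : liminf u F ≤ r) :
    Tendsto u F atTop ∨ ∀ l, r < l → ∃ᶠ x in F, u x < l := by
  by_cases hb : F.IsCoboundedUnder (· ≥ ·) u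
  · exact Or.inr fun l hl => frequently_lt_of_liminf_lt hb (hu.trans_lt hl)
  · refine Or.inl (tendsto_atTop.2 fun N => ?_)
    simp only [IsCoboundedUnder, IsCobounded, eventually_map, not_exists, not_forall] at hb
    obtain ⟨M, hM, hNM⟩ := hb N
    exact hM.mono fun x hx => (not_le.1 hNM).le.trans hx

theorem liminf_add_sub_div_eq_liminf_slope (f : ℝ → ℝ) (t : ℝ) :
    liminf (fun h => (f (t + h) - f t) / h) (𝓝[>] 0) = liminf (slope f t) (𝓝[>] t) := by
  have hmap : map (fun h => t + h) (𝓝[>] 0) = 𝓝[>] t := by simp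
  rw [← hmap, liminf, liminf, map_map]
  congr 2
  ext h
  rw [Function.comp_apply, slope_def_field, add_sub_cancel_left]

end DiniDerivative

theorem stmt8 (a : ℝ) (b : EReal) (hab : (a : EReal) < b)
    (f : ℝ → ℝ) (I : Set ℝ) (hI : I = {t : ℝ | a ≤ t ∧ (t : EReal) < b})
    (hf : ContinuousOn f I)
    (hdini : ∀ t ∈ I,
      Filter.liminf (fun h : ℝ => (f (t + h) - f t) / h) (nhdsWithin 0 (Set.Ioi 0)) ≤ 0) :
    AntitoneOn f I := by
  intro s hs c hc hsc
  have hsub : Icc s c ⊆ I := by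
    subst hI
    exact fun t ht => ⟨hs.1.trans ht.1, (EReal.coe_le_coe_iff.2 ht.2).trans_lt hc.2⟩
  refine le_of_tendsto_slope_atTop_or_frequently_slope_lt hsc (hf.mono hsub) fun t ht => ?_
  have hliminf := hdini t (hsub (Ico_subset_Icc_self ht))
  rw [liminf_add_sub_div_eq_liminf_slope] at hliminf
  exact tendsto_atTop_or_frequently_lt_of_liminf_le hliminf
end
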